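/- arXiv:2301.00398 — 2 statements merged into one kernel-verified Lean document; each statement's English description precedes it below -/
import Mathlib

section
/- For every integer d ≥ 1, the limit γ_d := lim_{N→∞} (1/log N) · Σ_{z∈ℤ^d, 0<‖z‖≤N} z₁ p(z) exists and is a finite strictly positive real number, where p is the kernel with exponent α = 1. -/
/-- Euclidean norm of a point of `ℤ^d`. -/
noncomputable def znorm (d : ℕ) (z : Fin d → ℤ) : ℝ :=
  Real.sqrt (∑ i, ((z i : ℝ)) ^ 2)

/-- The jump kernel `p(z) = ‖z‖^{-(d+α)} (2·1_{z₁>0} + 1_{z₁=0})`, `p(0) = 0`. -/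
noncomputable def pker (d : ℕ) [NeZero d] (α : ℝ) (z : Fin d → ℤ) : ℝ :=
  if z = 0 then 0
  else znorm d z ^ (-((d : ℝ) + α)) *
    ((if 0 < z 0 then (2 : ℝ) else 0) + (if z 0 = 0 then 1 else 0))

/-!
The drift summand `z₁ p(z)` is the restriction to `ℤ^d` of a nonnegative function `f` which is
homogeneous of degree `-d`. After rescaling by `2 ^ k`, its sum over the dyadic shell
`2 ^ k < ‖z‖ ≤ 2 ^ (k + 1)` is therefore a Riemann sum of `f` over the fixed shell `1 < ‖x‖ ≤ 2`,
so every dyadic shell contributes asymptotically the same amount `∫ f`. Since there are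
`log N / log 2` of them up to radius `N`, the truncated drift grows like `(∫ f / log 2) log N`.
-/

open Filter MeasureTheory Topology Metric Bornology Fintype
open scoped Pointwise

section LogarithmicGrowth

theorem tendsto_div_natCast_of_tendsto_sub {u : ℕ → ℝ} {c : ℝ}
    (hu : Tendsto (fun k => u (k + 1) - u k) atTop (𝓝 c)) :
    Tendsto (fun k : ℕ => u k / k) atTop (𝓝 c) := by
  have hmean := hu.cesaro.add (tendsto_inv_atTop_nhds_zero_nat.mul_const (u 0))
  simp only [Finset.sum_range_sub, zero_mul, add_zero] at hmean
  exact hmean.congr fun k => by ring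

theorem tendsto_div_of_tendsto_sub {G : ℝ → ℝ} (hG : Monotone G) {c : ℝ}
    (hc : Tendsto (fun k : ℕ => G (k + 1) - G k) atTop (𝓝 c)) :
    Tendsto (fun t => G t / t) atTop (𝓝 c) := by
  have hnat : Tendsto (fun k : ℕ => G k / k) atTop (𝓝 c) :=
    tendsto_div_natCast_of_tendsto_sub (u := fun k => G k)
      (by simpa only [Nat.cast_add_one] using hc)
  have hfloor := (hnat.comp tendsto_nat_floor_atTop).mul (tendsto_nat_floor_div_atTop (R := ℝ))
  have hceil := (hnat.comp tendsto_nat_ceil_atTop).mul (tendsto_nat_ceil_div_atTop (R := ℝ))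
  rw [mul_one] at hfloor hceil
  refine tendsto_of_tendsto_of_tendsto_of_le_of_le' hfloor hceil ?_ ?_ <;>
    filter_upwards [eventually_ge_atTop 1] with t ht
  · have hpos : (⌊t⌋₊ : ℝ) ≠ 0 := Nat.cast_ne_zero.2 (Nat.floor_pos.2 ht).ne'
    simp only [Function.comp_apply, div_mul_div_cancel₀ hpos]
    gcongr
    exact hG (Nat.floor_le (by positivity))
  · have hpos : (⌈t⌉₊ : ℝ) ≠ 0 := Nat.cast_ne_zero.2 (Nat.ceil_pos.2 (by positivity)).ne'
    simp only [Function.comp_apply, div_mul_div_cancel₀ hpos]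
    gcongr
    exact hG (Nat.le_ceil t)

theorem tendsto_div_log_of_tendsto_pow_sub {F : ℝ → ℝ} (hF : Monotone F) {b c : ℝ} (hb : 1 < b)
    (hc : Tendsto (fun k : ℕ => F (b ^ (k + 1)) - F (b ^ k)) atTop (𝓝 c)) :
    Tendsto (fun x => F x / Real.log x) atTop (𝓝 (c / Real.log b)) := by
  have hmono : Monotone fun t : ℝ => F (b ^ t) :=
    hF.comp (Real.monotone_rpow_of_base_ge_one hb.le)
  have hlogb := (tendsto_div_of_tendsto_sub hmono (c := c)
    (by exact_mod_cast hc)).comp (Real.tendsto_logb_atTop hb)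
  refine (hlogb.div_const (Real.log b)).congr' ?_
  filter_upwards [eventually_gt_atTop 0] with x hx
  rw [Function.comp_apply, Real.rpow_logb (by positivity) hb.ne' hx, Real.logb, div_div,
    div_mul_cancel₀ _ (Real.log_pos hb).ne']

end LogarithmicGrowth

section RiemannSum

variable {ι : Type*}

theorem coe_span_int_range_basisFun [Finite ι] :
    (Submodule.span ℤ (Set.range (Pi.basisFun ℝ ι)) : Set (ι → ℝ)) =
      Set.range fun z : ι → ℤ => ((↑) ∘ z : ι → ℝ) := by
  ext x
  simp only [SetLike.mem_coe, Module.Basis.mem_span_iff_repr_mem, Pi.basisFun_repr, Set.mem_range,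
    algebraMap_int_eq, eq_intCast]
  exact Classical.skolem.trans (exists_congr fun z => funext_iff.symm)

theorem tendsto_tsum_intVector_div_pow [Fintype ι] {s : Set (ι → ℝ)} {F : (ι → ℝ) → ℝ}
    (hF : ContinuousOn F (closure s)) (hbdd : IsBounded s) (hmeas : MeasurableSet s)
    (hfrontier : volume (frontier s) = 0) :
    Tendsto (fun n : ℕ => (∑' z : {z : ι → ℤ | (n : ℝ)⁻¹ • ((↑) ∘ z : ι → ℝ) ∈ s},
        F ((n : ℝ)⁻¹ • ((↑) ∘ z.1))) / n ^ card ι)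
      atTop (𝓝 (∫ x in s, F x)) := by
  obtain ⟨G, hG⟩ := ContinuousMap.exists_restrict_eq isClosed_closure ⟨_, hF.domRestrict⟩
  have hGF : Set.EqOn G F s := fun x hx => DFunLike.congr_fun hG ⟨x, subset_closure hx⟩
  rw [← setIntegral_congr_fun hmeas hGF]
  refine (tendsto_tsum_div_pow_atTop_integral s G G.continuous hbdd hmeas hfrontier).congr' ?_
  filter_upwards [eventually_ne_atTop 0] with n hn
  have hinj : Function.Injective fun z : ι → ℤ => (n : ℝ)⁻¹ • ((↑) ∘ z : ι → ℝ) :=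
    (smul_right_injective _ (inv_ne_zero (Nat.cast_ne_zero.2 hn))).comp
      Int.cast_injective.comp_left
  rw [coe_span_int_range_basisFun, Set.smul_set_range, ← Set.image_preimage_eq_inter_range,
    tsum_image _ hinj.injOn]
  exact congrArg (· / _) (tsum_congr fun z => hGF z.2)

end RiemannSum

section DyadicShell

variable {E : Type*} [NormedAddCommGroup E]

variable (E) in
/-- The half-open spherical shell `1 < ‖x‖ ≤ 2`, whose dilates by the nonnegative powers of two are
disjoint and cover the complement of the unit ball. -/
def dyadicShell : Set E := closedBall 0 2 \ closedBall 0 1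

theorem mem_dyadicShell {x : E} : x ∈ dyadicShell E ↔ 1 < ‖x‖ ∧ ‖x‖ ≤ 2 := by
  simp [dyadicShell, and_comm]

theorem inv_smul_mem_dyadicShell [NormedSpace ℝ E] {r : ℝ} (hr : 0 < r) {x : E} :
    r⁻¹ • x ∈ dyadicShell E ↔ r < ‖x‖ ∧ ‖x‖ ≤ 2 * r := by
  rw [mem_dyadicShell, norm_smul, norm_inv, Real.norm_of_nonneg hr.le, ← div_eq_inv_mul,
    one_lt_div hr, div_le_iff₀ hr]

theorem closure_dyadicShell_subset_compl_zero : closure (dyadicShell E) ⊆ {0}ᶜ := by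
  have hclosure : closure (dyadicShell E) ⊆ (ball 0 1)ᶜ :=
    closure_minimal (fun _ hx => Set.notMem_subset ball_subset_closedBall hx.2)
      isOpen_ball.isClosed_compl
  exact hclosure.trans (Set.compl_subset_compl.2 (by simp))

theorem continuousOn_comp_closure_preimage_dyadicShell {X Y : Type*} [TopologicalSpace X]
    [TopologicalSpace Y] {f : E → Y} (hf : ContinuousOn f {0}ᶜ) {g : X → E} (hg : Continuous g) :
    ContinuousOn (f ∘ g) (closure (g ⁻¹' dyadicShell E)) :=
  hf.comp hg.continuousOn fun _ hx =>
    closure_dyadicShell_subset_compl_zero (hg.closure_preimage_subset _ hx)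

end DyadicShell

section LatticeSum

variable {ι E : Type*} [NormedAddCommGroup E] [NormedSpace ℝ E]
  {e : (ι → ℝ) ≃L[ℝ] E} {f : E → ℝ}

variable (e) in
/-- The point with integer coordinates `z` of the lattice `e(ℤ^ι)`. A linear isomorphism
`e : ℝ^ι ≃ E` encodes both a full lattice in `E` and a norm on `ℝ^ι`. -/
def latticePoint (z : ι → ℤ) : E := e ((↑) ∘ z)

section Finite

variable [Finite ι]

variable (e) in
theorem finite_setOf_norm_latticePoint_le (R : ℝ) : {z | ‖latticePoint e z‖ ≤ R}.Finite := by
  cases nonempty_fintype ι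
  have hisometry : Isometry fun z : ι → ℤ => ((↑) ∘ z : ι → ℝ) :=
    Isometry.piMap _ fun _ => Isometry.of_dist_eq Int.dist_cast_real
  have hbdd := (e.antilipschitz.comp hisometry.antilipschitz).isBounded_preimage
    (isBounded_closedBall (x := 0) (r := R))
  refine (isCompact_of_isClosed_isBounded (isClosed_discrete _) hbdd).finite_of_discrete.subset ?_
  exact fun z hz => mem_closedBall_zero_iff.2 hz

variable (e) in
/-- The sum of `f` over the points of the lattice `e(ℤ^ι)` of norm at most `R`. -/
noncomputable def latticeSum (f : E → ℝ) (R : ℝ) : ℝ :=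
  ∑ z ∈ (finite_setOf_norm_latticePoint_le e R).toFinset, f (latticePoint e z)

theorem latticeSum_eq_tsum_ite (R : ℝ) :
    latticeSum e f R = ∑' z, if ‖latticePoint e z‖ ≤ R then f (latticePoint e z) else 0 := by
  rw [latticeSum, tsum_eq_sum (s := (finite_setOf_norm_latticePoint_le e R).toFinset)
    fun z hz => if_neg (by simpa using hz)]
  exact Finset.sum_congr rfl fun z hz => (if_pos (by simpa using hz)).symm

theorem monotone_latticeSum (hf : 0 ≤ f) : Monotone (latticeSum e f) := fun _ _ hRS =>
  Finset.sum_le_sum_of_subset_of_nonneg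
    (Set.Finite.toFinset_subset_toFinset.2 fun _ hz => le_trans hz hRS) fun _ _ _ => hf _

theorem isBounded_preimage_dyadicShell : IsBounded (e ⁻¹' dyadicShell E) := by
  cases nonempty_fintype ι
  exact e.antilipschitz.isBounded_preimage (isBounded_closedBall.subset Set.sdiff_subset)

theorem measurableSet_preimage_dyadicShell : MeasurableSet (e ⁻¹' dyadicShell E) :=
  (isClosed_closedBall.preimage e.continuous).measurableSet.diff
    (isClosed_closedBall.preimage e.continuous).measurableSet

end Finite

variable [Fintype ι]

theorem volume_frontier_preimage_dyadicShell : volume (frontier (e ⁻¹' dyadicShell E)) = 0 := by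
  have hball (r : ℝ) : volume (frontier (e ⁻¹' closedBall 0 r)) = 0 :=
    ((convex_closedBall 0 r).linear_preimage e.toLinearMap).addHaar_frontier volume
  rw [dyadicShell, Set.preimage_sdiff, Set.sdiff_eq]
  refine measure_mono_null (frontier_inter_subset _ _) (measure_union_null ?_ ?_)
  · exact measure_mono_null Set.inter_subset_left (hball 2)
  · rw [frontier_compl]
    exact measure_mono_null Set.inter_subset_right (hball 1)

theorem integrableOn_comp_preimage_dyadicShell (hf : ContinuousOn f {0}ᶜ) :
    IntegrableOn (f ∘ e) (e ⁻¹' dyadicShell E) :=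
  ((continuousOn_comp_closure_preimage_dyadicShell hf e.continuous).integrableOn_compact
    isBounded_preimage_dyadicShell.isCompact_closure).mono_set subset_closure

theorem setIntegral_preimage_dyadicShell_pos (hcont : ContinuousOn f {0}ᶜ) (hnonneg : 0 ≤ f)
    {x₀ : E} (hx₀ : x₀ ∈ ball 0 2 \ closedBall 0 1) (hpos : 0 < f x₀) :
    0 < ∫ x in e ⁻¹' dyadicShell E, f (e x) := by
  let U : Set E := (ball 0 2 \ closedBall 0 1) ∩ f ⁻¹' Set.Ioi 0
  have hopen : IsOpen U := by
    refine (hcont.mono fun x hx => ?_).isOpen_inter_preimage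
      (isOpen_ball.sdiff isClosed_closedBall) isOpen_Ioi
    rintro rfl
    simp at hx
  have hne : (e ⁻¹' U).Nonempty := ⟨e.symm x₀, by simpa [U, hpos] using hx₀⟩
  refine (setIntegral_pos_iff_support_of_nonneg_ae (Eventually.of_forall fun x => hnonneg (e x))
    (integrableOn_comp_preimage_dyadicShell hcont)).2 ?_
  refine ((hopen.preimage e.continuous).measure_pos volume hne).trans_le (measure_mono ?_)
  exact fun x hx => ⟨hx.2.ne', ball_subset_closedBall hx.1.1, hx.1.2⟩

theorem latticeSum_two_mul_sub (hhom : ∀ r > 0, ∀ x, f (r • x) = (r ^ card ι)⁻¹ * f x) {r : ℝ}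
    (hr : 0 < r) :
    latticeSum e f (2 * r) - latticeSum e f r =
      (∑' z : {z : ι → ℤ | r⁻¹ • ((↑) ∘ z : ι → ℝ) ∈ e ⁻¹' dyadicShell E},
        f (e (r⁻¹ • ((↑) ∘ z.1)))) / r ^ card ι := by
  classical
  set S := fun R => (finite_setOf_norm_latticePoint_le e R).toFinset with hS
  have hsub : S r ⊆ S (2 * r) :=
    Set.Finite.toFinset_subset_toFinset.2 fun z hz => hz.out.trans (by linarith)
  have hshell : {z : ι → ℤ | r⁻¹ • ((↑) ∘ z : ι → ℝ) ∈ e ⁻¹' dyadicShell E} =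
      ↑(S (2 * r) \ S r) := by
    ext z
    simp [hS, inv_smul_mem_dyadicShell hr, latticePoint, and_comm]
  have hscale (z : ι → ℤ) :
      f (e (r⁻¹ • ((↑) ∘ z : ι → ℝ))) / r ^ card ι = f (latticePoint e z) := by
    rw [map_smul, hhom _ (inv_pos.2 hr), inv_pow, inv_inv,
      mul_div_cancel_left₀ _ (pow_pos hr _).ne', latticePoint]
  rw [hshell, Finset.tsum_subtype' _ fun z : ι → ℤ => f (e (r⁻¹ • ((↑) ∘ z : ι → ℝ))),
    Finset.sum_div, Finset.sum_congr rfl fun z _ => hscale z]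
  exact sub_eq_iff_eq_add.2 (Finset.sum_sdiff hsub).symm

theorem tendsto_latticeSum_div_log (hcont : ContinuousOn f {0}ᶜ) (hnonneg : 0 ≤ f)
    (hhom : ∀ r > 0, ∀ x, f (r • x) = (r ^ card ι)⁻¹ * f x) :
    Tendsto (fun R => latticeSum e f R / Real.log R) atTop
      (𝓝 ((∫ x in e ⁻¹' dyadicShell E, f (e x)) / Real.log 2)) := by
  refine tendsto_div_log_of_tendsto_pow_sub (monotone_latticeSum hnonneg) one_lt_two ?_
  have hriemann := tendsto_tsum_intVector_div_pow
    (continuousOn_comp_closure_preimage_dyadicShell hcont e.continuous)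
    isBounded_preimage_dyadicShell measurableSet_preimage_dyadicShell
    volume_frontier_preimage_dyadicShell
  refine (hriemann.comp (tendsto_pow_atTop_atTop_of_one_lt (one_lt_two (α := ℕ)))).congr fun k => ?_
  have hcast : (2 : ℝ) ^ k = (2 ^ k : ℕ) := by norm_num
  rw [pow_succ', latticeSum_two_mul_sub hhom (by positivity), hcast]
  rfl

end LatticeSum

section Drift

/-- The identification of `ℝ^d` with the Euclidean space: its lattice is `ℤ^d`. -/
noncomputable abbrev stdEquiv (d : ℕ) : (Fin d → ℝ) ≃L[ℝ] EuclideanSpace ℝ (Fin d) :=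
  (EuclideanSpace.equiv (Fin d) ℝ).symm

theorem norm_latticePoint_stdEquiv {d : ℕ} (z : Fin d → ℤ) :
    ‖latticePoint (stdEquiv d) z‖ = znorm d z := by
  simp [EuclideanSpace.norm_eq, znorm, latticePoint]

variable {d : ℕ} [NeZero d] {α : ℝ}

/-- The extension of the drift summand `z ↦ z₁ p(z)` from `ℤ^d` to `ℝ^d`; the positive part of `x₁`
takes the place of the indicators, as the term `1_{z₁=0}` does not contribute. -/
noncomputable def driftDensity (d : ℕ) [NeZero d] (α : ℝ) (x : EuclideanSpace ℝ (Fin d)) : ℝ :=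
  2 * max (x 0) 0 * ‖x‖ ^ (-((d : ℝ) + α))

theorem driftDensity_nonneg : 0 ≤ driftDensity d α := fun x => by
  unfold driftDensity
  positivity

theorem continuousOn_driftDensity : ContinuousOn (driftDensity d α) {0}ᶜ :=
  (by fun_prop : Continuous fun x : EuclideanSpace ℝ (Fin d) => 2 * max (x 0) 0).continuousOn.mul
    (continuous_norm.continuousOn.rpow_const fun _ hx => Or.inl (norm_ne_zero_iff.2 hx))

theorem driftDensity_smul {r : ℝ} (hr : 0 < r) (x : EuclideanSpace ℝ (Fin d)) :
    driftDensity d α (r • x) = r ^ (1 - (d : ℝ) - α) * driftDensity d α x := by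
  have hmax : max ((r • x) 0) 0 = r * max (x 0) 0 := by
    rw [mul_max_of_nonneg _ _ hr.le, mul_zero, PiLp.smul_apply, smul_eq_mul]
  have hexp : 1 - (d : ℝ) - α = 1 + -(d + α) := by ring
  rw [driftDensity, driftDensity, hmax, norm_smul, Real.norm_of_nonneg hr.le,
    Real.mul_rpow hr.le (norm_nonneg x), hexp, Real.rpow_add hr, Real.rpow_one]
  ring

theorem driftDensity_one_smul {r : ℝ} (hr : 0 < r) (x : EuclideanSpace ℝ (Fin d)) :
    driftDensity d 1 (r • x) = (r ^ card (Fin d))⁻¹ * driftDensity d 1 x := by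
  rw [driftDensity_smul hr, Fintype.card_fin, ← Real.rpow_natCast, ← Real.rpow_neg hr.le,
    sub_sub_cancel_left]

theorem driftDensity_pos {x : EuclideanSpace ℝ (Fin d)} (hx : 0 < x 0) :
    0 < driftDensity d α x := by
  have hne : x ≠ 0 := by
    rintro rfl
    simp at hx
  rw [driftDensity, max_eq_left hx.le]
  exact mul_pos (mul_pos two_pos hx) (Real.rpow_pos_of_pos (norm_pos_iff.2 hne) _)

theorem driftDensity_latticePoint (z : Fin d → ℤ) :
    driftDensity d α (latticePoint (stdEquiv d) z) = z 0 * pker d α z := by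
  rw [driftDensity, norm_latticePoint_stdEquiv, pker]
  change 2 * max (z 0 : ℝ) 0 * _ = _
  rcases eq_or_ne z 0 with rfl | hz
  · simp
  rw [if_neg hz]
  rcases lt_trichotomy (z 0) 0 with hneg | hzero | hpos
  · have hcast : (z 0 : ℝ) ≤ 0 := by exact_mod_cast hneg.le
    simp [hneg.not_gt, hneg.ne, max_eq_right hcast]
  · simp [hzero]
  · have hcast : (0 : ℝ) ≤ z 0 := by exact_mod_cast hpos.le
    rw [max_eq_left hcast, if_pos hpos, if_neg hpos.ne']
    ring

theorem latticeSum_driftDensity (R : ℝ) :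
    latticeSum (stdEquiv d) (driftDensity d α) R =
      ∑' z : Fin d → ℤ, if z ≠ 0 ∧ znorm d z ≤ R then (z 0 : ℝ) * pker d α z else 0 := by
  simp only [latticeSum_eq_tsum_ite, norm_latticePoint_stdEquiv, driftDensity_latticePoint]
  refine tsum_congr fun z => ?_
  by_cases hz : z = 0 <;> simp [hz]

end Drift

/-- for `α = 1`, the limit
`γ_d = lim_{N→∞} (1/log N) Σ_{0<‖z‖≤N} z₁ p(z)` exists and is strictly positive. -/
theorem statement0 (d : ℕ) [NeZero d] (hd : 1 ≤ d) :
    ∃ γ : ℝ, 0 < γ ∧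
      Filter.Tendsto
        (fun N : ℕ => (Real.log N)⁻¹ *
          ∑' z : Fin d → ℤ,
            (if z ≠ 0 ∧ znorm d z ≤ (N : ℝ) then (z 0 : ℝ) * pker d 1 z else 0))
        Filter.atTop (nhds γ) := by
  have hpoint : EuclideanSpace.single (0 : Fin d) (3 / 2 : ℝ) ∈ ball 0 2 \ closedBall 0 1 := by
    norm_num [abs_of_pos]
  refine ⟨(∫ x in stdEquiv d ⁻¹' dyadicShell _, driftDensity d 1 (stdEquiv d x)) / Real.log 2,
    div_pos ?_ (Real.log_pos one_lt_two), ?_⟩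
  · exact setIntegral_preimage_dyadicShell_pos continuousOn_driftDensity driftDensity_nonneg hpoint
      (driftDensity_pos (by simp))
  · refine ((tendsto_latticeSum_div_log continuousOn_driftDensity driftDensity_nonneg
      fun _ => driftDensity_one_smul).comp tendsto_natCast_atTop_atTop).congr fun N => ?_
    rw [Function.comp_apply, latticeSum_driftDensity, div_eq_inv_mul]
end

section
/- Let d ≥ 1 and α = 2, and let D = (D_{i,j}) be the d×d matrix with entries D_{i,j} = lim_{N→∞} (1/log N) Σ_{0<‖z‖≤N} z_i z_j p(z) (assumed to exist in ℝ). Then for every a ∈ ℝ^d and β ∈ ℝ, lim_{N→∞} (N²/log N) · Σ_{z∈ℤ^d, z≠0} p(z) (e^{iβ(z·a)/N} − 1 − iβ(z·a)/N) = −(β²/2) Σ_{i,j=1}^d D_{i,j} a_i a_j, where the limit is in ℂ. -/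
/-!
On the ball `‖z‖ ≤ N` replace `e^{ix} - 1 - ix`, `x = β (z·a) / N`, by `-x² / 2`; off it, by `0`.
Since `x = O(‖z‖ / N)`, the third-order Taylor estimate inside and the trivial bound `2|x|` outside
show that the error in the `z`-th summand is `O(N⁻¹ ‖z‖^{1-d} (N + ‖z‖)⁻²)`. The lattice has
`O(n^{d-1})` points on the cube surface of radius `n`, so the total error is
`O(N⁻¹ ∑ₙ (N + n)⁻²) = O(N⁻²)`, which is negligible against `log N / N²`. What remains is
the truncated second moment of `p` in the direction `a`, whose logarithmic growth is given by `D`.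
-/

open Filter Finset Topology Asymptotics

section LatticeBoxes

variable {ι : Type*} [Fintype ι] [DecidableEq ι]

lemma card_box_succ_pi_int_le (n : ℕ) :
    #(box (n + 1) : Finset (ι → ℤ)) ≤
      2 * Fintype.card ι * (2 * n + 3) ^ (Fintype.card ι - 1) := by
  have hsub : Icc (-n : ι → ℤ) n ⊆ Icc (-(n.succ : ι → ℤ)) n.succ := by
    rw [← box_succ_union_prod]
    exact subset_union_right
  have hcard (m : ℕ) : #(Icc (-m : ι → ℤ) m) = (2 * m + 1) ^ Fintype.card ι := by
    rw [Pi.card_Icc, ← card_univ]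
    exact prod_eq_pow_card fun i _ => by
      simp only [Pi.neg_apply, Pi.natCast_apply, Int.card_Icc]
      omega
  have hpow := abs_pow_sub_pow_le (2 * n + 3 : ℤ) (2 * n + 1) (Fintype.card ι)
  rw [box_succ_eq_sdiff, card_sdiff_of_subset hsub, hcard, hcard]
  grind

lemma exists_le_abs_of_mem_box_succ {n : ℕ} {z : ι → ℤ} (hz : z ∈ box (n + 1)) :
    ∃ i, (n + 1 : ℤ) ≤ |z i| := by
  by_contra! h
  rw [box_succ_eq_sdiff, Finset.mem_sdiff] at hz
  refine hz.2 (mem_Icc.mpr ⟨fun i => ?_, fun i => ?_⟩)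
  · exact (abs_le.mp (Int.lt_add_one_iff.mp (h i))).1
  · exact (abs_le.mp (Int.lt_add_one_iff.mp (h i))).2

lemma sum_Icc_neg_eq_sum_box {M : Type*} [AddCommMonoid M] (f : (ι → ℤ) → M) (n : ℕ) :
    ∑ z ∈ Icc (-n : ι → ℤ) n, f z = f 0 + ∑ k ∈ range n, ∑ z ∈ box (k + 1), f z := by
  induction n with
  | zero => simp
  | succ n ih =>
    rw [sum_range_succ, ← add_assoc, ← ih, ← box_succ_disjUnion, sum_disjUnion, add_comm]

lemma exists_subset_Icc_neg (s : Finset (ι → ℤ)) : ∃ n : ℕ, s ⊆ Icc (-n : ι → ℤ) n := by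
  obtain ⟨b, hb⟩ := (tendsto_Icc_neg_atTop_atTop.eventually_ge_atTop s).exists
  obtain ⟨m, hm⟩ := (Set.finite_range b).bddAbove
  have hbm : b ≤ (m.toNat : ι → ℤ) := fun i => (hm ⟨i, rfl⟩).trans m.self_le_toNat
  exact ⟨m.toNat, hb.trans (Icc_subset_Icc (neg_le_neg hbm) hbm)⟩

end LatticeBoxes

section EuclideanNorm

variable {d : ℕ}

lemma znorm_nonneg (z : Fin d → ℤ) : 0 ≤ znorm d z := Real.sqrt_nonneg _

lemma abs_le_znorm (z : Fin d → ℤ) (i : Fin d) : |(z i : ℝ)| ≤ znorm d z :=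
  Real.abs_le_sqrt <|
    single_le_sum (f := fun i => (z i : ℝ) ^ 2) (fun _ _ => sq_nonneg _) (mem_univ i)

lemma znorm_pos {z : Fin d → ℤ} (hz : z ≠ 0) : 0 < znorm d z := by
  obtain ⟨i, hi⟩ := Function.ne_iff.mp hz
  exact (abs_pos.mpr (Int.cast_ne_zero.mpr hi)).trans_le (abs_le_znorm z i)

lemma abs_sum_mul_le_znorm (z : Fin d → ℤ) (a : Fin d → ℝ) :
    |∑ i, (z i : ℝ) * a i| ≤ √(∑ i, a i ^ 2) * znorm d z := by
  rw [mul_comm, znorm, ← Real.sqrt_mul (by positivity)]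
  exact Real.abs_le_sqrt (sum_mul_sq_le_sq_mul_sq _ _ _)

lemma le_znorm_of_mem_box_succ {n : ℕ} {z : Fin d → ℤ} (hz : z ∈ box (n + 1)) :
    (n + 1 : ℝ) ≤ znorm d z := by
  obtain ⟨i, hi⟩ := exists_le_abs_of_mem_box_succ hz
  exact le_trans (mod_cast hi) (abs_le_znorm z i)

lemma finite_setOf_znorm_le (R : ℝ) : {z : Fin d → ℤ | znorm d z ≤ R}.Finite := by
  refine (Set.Finite.pi' fun _ : Fin d => Set.finite_Icc (-⌈R⌉) ⌈R⌉).subset fun z hz i => ?_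
  have h : |(z i : ℝ)| ≤ (⌈R⌉ : ℝ) := (abs_le_znorm z i).trans (hz.trans (Int.le_ceil R))
  exact abs_le.mp (mod_cast h)

lemma summable_ite_znorm_le {E : Type*} [AddCommMonoid E] [TopologicalSpace E]
    (f : (Fin d → ℤ) → E) (R : ℝ) :
    Summable fun z => if z ≠ 0 ∧ znorm d z ≤ R then f z else 0 :=
  summable_of_hasFiniteSupport <| (finite_setOf_znorm_le R).subset fun _ hz =>
    (of_not_not fun h => hz (if_neg h)).2

end EuclideanNorm

section RadialSums

variable {d : ℕ} {N : ℝ}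

lemma sum_range_inv_add_sq_le (hN : 0 < N) (n : ℕ) :
    ∑ k ∈ range n, ((N + (k + 1)) ^ 2)⁻¹ ≤ N⁻¹ := by
  have hstep (k : ℕ) : ((N + (k + 1)) ^ 2)⁻¹ ≤ (N + k)⁻¹ - (N + (k + 1 : ℕ))⁻¹ := by
    have : 0 < N + k := by positivity
    push_cast
    rw [inv_sub_inv (by positivity) (by positivity), inv_eq_one_div,
      div_le_div_iff₀ (by positivity) (by positivity)]
    nlinarith
  calc ∑ k ∈ range n, ((N + (k + 1)) ^ 2)⁻¹
      ≤ ∑ k ∈ range n, ((N + k)⁻¹ - (N + (k + 1 : ℕ))⁻¹) := sum_le_sum fun k _ => hstep k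
    _ = N⁻¹ - (N + n)⁻¹ := by rw [sum_range_sub' fun k : ℕ => (N + k)⁻¹]; simp
    _ ≤ N⁻¹ := sub_le_self _ (by positivity)

lemma sum_box_succ_inv_znorm_le (hN : 0 < N) (n : ℕ) :
    ∑ z ∈ (box (n + 1) : Finset (Fin d → ℤ)), (znorm d z ^ (d - 1) * (N + znorm d z) ^ 2)⁻¹ ≤
      2 * d * 3 ^ (d - 1) * ((N + (n + 1)) ^ 2)⁻¹ := by
  have hterm (z : Fin d → ℤ) (hz : z ∈ box (n + 1)) :
      (znorm d z ^ (d - 1) * (N + znorm d z) ^ 2)⁻¹ ≤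
        ((n + 1 : ℝ) ^ (d - 1) * (N + (n + 1)) ^ 2)⁻¹ := by
    have hnz := le_znorm_of_mem_box_succ hz
    have hz_nonneg := znorm_nonneg z
    gcongr
  have hcard : (#(box (n + 1) : Finset (Fin d → ℤ)) : ℝ) ≤ 2 * d * (3 * (n + 1)) ^ (d - 1) := by
    have h := card_box_succ_pi_int_le (ι := Fin d) n
    rw [Fintype.card_fin] at h
    calc (#(box (n + 1) : Finset (Fin d → ℤ)) : ℝ) ≤ 2 * d * (2 * n + 3) ^ (d - 1) := mod_cast h
      _ ≤ 2 * d * (3 * (n + 1)) ^ (d - 1) := by gcongr; linarith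
  calc ∑ z ∈ (box (n + 1) : Finset (Fin d → ℤ)), (znorm d z ^ (d - 1) * (N + znorm d z) ^ 2)⁻¹
      ≤ #(box (n + 1) : Finset (Fin d → ℤ)) * ((n + 1 : ℝ) ^ (d - 1) * (N + (n + 1)) ^ 2)⁻¹ := by
        simpa only [nsmul_eq_mul] using sum_le_card_nsmul _ _ _ hterm
    _ ≤ 2 * d * (3 * (n + 1)) ^ (d - 1) * ((n + 1 : ℝ) ^ (d - 1) * (N + (n + 1)) ^ 2)⁻¹ := by
        gcongr
    _ = 2 * d * 3 ^ (d - 1) * ((N + (n + 1)) ^ 2)⁻¹ := by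
        rw [mul_pow]
        field_simp

lemma sum_le_of_le_inv_znorm {f : (Fin d → ℤ) → ℝ} {c : ℝ} (hc : 0 ≤ c) (hN : 0 < N)
    (hf_nonneg : 0 ≤ f) (hf_zero : f 0 = 0)
    (hf : ∀ z ≠ 0, f z ≤ c * (znorm d z ^ (d - 1) * (N + znorm d z) ^ 2)⁻¹)
    (s : Finset (Fin d → ℤ)) :
    ∑ z ∈ s, f z ≤ c * (2 * d * 3 ^ (d - 1)) * N⁻¹ := by
  obtain ⟨n, hs⟩ := exists_subset_Icc_neg s
  have hbox (k : ℕ) : ∑ z ∈ box (k + 1), f z ≤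
      c * (2 * d * 3 ^ (d - 1) * ((N + (k + 1)) ^ 2)⁻¹) := by
    refine le_trans (sum_le_sum fun z hz => hf z ?_) ?_
    · exact mt (eq_zero_iff_eq_zero_of_mem_box hz).mp k.succ_ne_zero
    · rw [← mul_sum]
      exact mul_le_mul_of_nonneg_left (sum_box_succ_inv_znorm_le hN k) hc
  calc ∑ z ∈ s, f z ≤ ∑ z ∈ Icc (-n : Fin d → ℤ) n, f z :=
        sum_le_sum_of_subset_of_nonneg hs fun z _ _ => hf_nonneg z
    _ = ∑ k ∈ range n, ∑ z ∈ box (k + 1), f z := by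
        rw [sum_Icc_neg_eq_sum_box, hf_zero, zero_add]
    _ ≤ ∑ k ∈ range n, c * (2 * d * 3 ^ (d - 1) * ((N + (k + 1)) ^ 2)⁻¹) :=
        sum_le_sum fun k _ => hbox k
    _ = c * (2 * d * 3 ^ (d - 1)) * ∑ k ∈ range n, ((N + (k + 1)) ^ 2)⁻¹ := by
        simp only [← mul_assoc, mul_sum]
    _ ≤ c * (2 * d * 3 ^ (d - 1)) * N⁻¹ := by
        gcongr
        exact sum_range_inv_add_sq_le hN n

end RadialSums

section CompensatedExponential

/-- The compensated exponential `e^{ix} - 1 - ix` of the Lévy–Khintchine formula. -/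
noncomputable def compensatedExp (x : ℝ) : ℂ :=
  Complex.exp (Complex.I * x) - 1 - Complex.I * x

@[simp]
lemma compensatedExp_zero : compensatedExp 0 = 0 := by simp [compensatedExp]

lemma norm_compensatedExp_le (x : ℝ) : ‖compensatedExp x‖ ≤ 2 * |x| := by
  calc ‖compensatedExp x‖ ≤ ‖Complex.exp (Complex.I * x) - 1‖ + ‖Complex.I * x‖ := norm_sub_le _ _
    _ ≤ |x| + |x| := add_le_add Real.norm_exp_I_mul_ofReal_sub_one_le (by simp)
    _ = 2 * |x| := (two_mul _).symm

lemma norm_compensatedExp_add_sq_div_two_le (x : ℝ) :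
    ‖compensatedExp x + ((x ^ 2 / 2 : ℝ) : ℂ)‖ ≤ |x| ^ 3 * Real.exp |x| := by
  have htaylor : compensatedExp x + ((x ^ 2 / 2 : ℝ) : ℂ) = Complex.exp (Complex.I * x) -
      ∑ m ∈ range 3, (Complex.I * x) ^ m / (m.factorial : ℂ) := by
    simp only [compensatedExp, sum_range_succ, sum_range_zero, mul_pow, Complex.I_sq, Nat.factorial]
    push_cast
    ring
  rw [htaylor]
  simpa using Complex.norm_exp_sub_sum_le_norm_mul_exp (Complex.I * x) 3

-- `s ^ 3 / (1 + s) ^ 2` is comparable to `s ^ 3` for `s ≤ 1` and to `s` for `1 ≤ s`.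
lemma norm_compensatedExp_add_ite_le {x A s : ℝ} (hA : 0 ≤ A) (hs : 0 ≤ s) (hx : |x| ≤ A * s) :
    ‖compensatedExp x + ((if s ≤ 1 then x ^ 2 / 2 else 0 : ℝ) : ℂ)‖ ≤
      (4 * A ^ 3 * Real.exp A + 8 * A) * (s ^ 3 / (1 + s) ^ 2) := by
  split_ifs with h
  · have hxA : |x| ≤ A := hx.trans (mul_le_of_le_one_right hA h)
    have hs3 : s ^ 3 ≤ 4 * (s ^ 3 / (1 + s) ^ 2) := by
      rw [← mul_div_assoc, le_div_iff₀ (by positivity), mul_comm 4]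
      exact mul_le_mul_of_nonneg_left (by nlinarith) (by positivity)
    calc ‖compensatedExp x + ((x ^ 2 / 2 : ℝ) : ℂ)‖ ≤ |x| ^ 3 * Real.exp |x| :=
          norm_compensatedExp_add_sq_div_two_le x
      _ ≤ (A * s) ^ 3 * Real.exp A := by gcongr
      _ = A ^ 3 * Real.exp A * s ^ 3 := by ring
      _ ≤ A ^ 3 * Real.exp A * (4 * (s ^ 3 / (1 + s) ^ 2)) := by gcongr
      _ = 4 * A ^ 3 * Real.exp A * (s ^ 3 / (1 + s) ^ 2) := by ring
      _ ≤ (4 * A ^ 3 * Real.exp A + 8 * A) * (s ^ 3 / (1 + s) ^ 2) := by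
          gcongr
          exact le_add_of_nonneg_right (by positivity)
  · have hs1 : s ≤ 4 * (s ^ 3 / (1 + s) ^ 2) := by
      rw [← mul_div_assoc, le_div_iff₀ (by positivity)]
      calc s * (1 + s) ^ 2 ≤ s * (2 * s) ^ 2 := by gcongr; linarith
        _ = 4 * s ^ 3 := by ring
    calc ‖compensatedExp x + ((0 : ℝ) : ℂ)‖ ≤ 2 * |x| := by
          simpa using norm_compensatedExp_le x
      _ ≤ 2 * (A * s) := by gcongr
      _ = 2 * A * s := by ring
      _ ≤ 2 * A * (4 * (s ^ 3 / (1 + s) ^ 2)) := by gcongr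
      _ = 8 * A * (s ^ 3 / (1 + s) ^ 2) := by ring
      _ ≤ (4 * A ^ 3 * Real.exp A + 8 * A) * (s ^ 3 / (1 + s) ^ 2) := by
          gcongr
          exact le_add_of_nonneg_left (by positivity)

end CompensatedExponential

section TruncatedExpansion

variable {d : ℕ} {p φ : (Fin d → ℤ) → ℝ} {A C N : ℝ}

/-- The sum `∑_{0 < ‖z‖ ≤ N} φ(z) ψ(z) p(z)`, i.e. the second moment of `φ` and `ψ` under the
kernel `p`, truncated at radius `N`. -/
noncomputable def truncatedSecondMoment (p φ ψ : (Fin d → ℤ) → ℝ) (N : ℝ) : ℝ :=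
  ∑' z, if z ≠ 0 ∧ znorm d z ≤ N then φ z * ψ z * p z else 0

lemma truncatedSecondMoment_sum_mul {κ : Type*} [Fintype κ] (p : (Fin d → ℤ) → ℝ)
    (φ : κ → (Fin d → ℤ) → ℝ) (b : κ → ℝ) (N : ℝ) :
    truncatedSecondMoment p (fun z => ∑ i, φ i z * b i) (fun z => ∑ i, φ i z * b i) N =
      ∑ i, ∑ j, truncatedSecondMoment p (φ i) (φ j) N * b i * b j := by
  have hsum (i j : κ) : Summable fun z =>
      (if z ≠ 0 ∧ znorm d z ≤ N then φ i z * φ j z * p z else 0) * b i * b j :=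
    ((summable_ite_znorm_le _ N).mul_right _).mul_right _
  simp_rw [truncatedSecondMoment, ← tsum_mul_right,
    fun i => (Summable.tsum_finsetSum fun j (_ : j ∈ univ) => hsum i j).symm]
  rw [← Summable.tsum_finsetSum fun i _ => summable_sum fun j _ => hsum i j]
  refine tsum_congr fun z => ?_
  split_ifs
  · rw [sum_mul_sum, sum_mul]
    refine sum_congr rfl fun i _ => ?_
    rw [sum_mul]
    exact sum_congr rfl fun j _ => by ring
  · simp

/-- The error made in the `z`-th summand when `e^{iφ(z)/N} - 1 - iφ(z)/N` is replaced by
`-(φ(z)/N)²/2` for `‖z‖ ≤ N` and by `0` for `‖z‖ > N`. -/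
noncomputable def truncationError (p φ : (Fin d → ℤ) → ℝ) (N : ℝ) (z : Fin d → ℤ) : ℂ :=
  p z * (compensatedExp (φ z / N) + ((if znorm d z ≤ N then (φ z / N) ^ 2 / 2 else 0 : ℝ) : ℂ))

lemma norm_truncationError_le (hA : 0 ≤ A) (hN : 0 < N) {z : Fin d → ℤ} (hz : z ≠ 0)
    (hp : |p z| ≤ C * (znorm d z ^ (d + 2))⁻¹) (hφ : |φ z| ≤ A * znorm d z) :
    ‖truncationError p φ N z‖ ≤ C * (4 * A ^ 3 * Real.exp A + 8 * A) * N⁻¹ *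
      (znorm d z ^ (d - 1) * (N + znorm d z) ^ 2)⁻¹ := by
  obtain ⟨i, -⟩ := Function.ne_iff.mp hz
  have hd : d + 2 = d - 1 + 3 := by have := i.pos; omega
  have hr : 0 < znorm d z := znorm_pos hz
  have hφN : |φ z / N| ≤ A * (znorm d z / N) := by
    rw [abs_div, abs_of_pos hN, ← mul_div_assoc]
    gcongr
  have htaylor := norm_compensatedExp_add_ite_le hA (by positivity) hφN
  simp only [div_le_one hN] at htaylor
  calc ‖truncationError p φ N z‖ ≤ C * (znorm d z ^ (d + 2))⁻¹ *
        ((4 * A ^ 3 * Real.exp A + 8 * A) * ((znorm d z / N) ^ 3 / (1 + znorm d z / N) ^ 2)) := by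
        rw [truncationError, norm_mul, Complex.norm_real, Real.norm_eq_abs]
        exact mul_le_mul hp htaylor (norm_nonneg _) ((abs_nonneg _).trans hp)
    _ = C * (4 * A ^ 3 * Real.exp A + 8 * A) * N⁻¹ *
        (znorm d z ^ (d - 1) * (N + znorm d z) ^ 2)⁻¹ := by
        have hadd : 1 + znorm d z / N = (N + znorm d z) / N := by field_simp
        rw [hadd, hd, pow_add]
        field_simp

lemma sum_norm_truncationError_le (hA : 0 ≤ A) (hC : 0 ≤ C) (hN : 0 < N)
    (hp : ∀ z ≠ 0, |p z| ≤ C * (znorm d z ^ (d + 2))⁻¹) (hφ : ∀ z, |φ z| ≤ A * znorm d z)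
    (s : Finset (Fin d → ℤ)) :
    ∑ z ∈ s, ‖truncationError p φ N z‖ ≤
      C * (4 * A ^ 3 * Real.exp A + 8 * A) * (2 * d * 3 ^ (d - 1)) * (N ^ 2)⁻¹ := by
  have hφ_zero : φ 0 = 0 := by simpa [znorm] using hφ 0
  have hle := sum_le_of_le_inv_znorm (c := C * (4 * A ^ 3 * Real.exp A + 8 * A) * N⁻¹)
    (by positivity) hN (fun _ => norm_nonneg _) (by simp [truncationError, hφ_zero])
    (fun z hz => norm_truncationError_le hA hN hz (hp z hz) (hφ z)) s
  exact hle.trans_eq (by ring)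

lemma summable_norm_truncationError (hA : 0 ≤ A) (hC : 0 ≤ C) (hN : 0 < N)
    (hp : ∀ z ≠ 0, |p z| ≤ C * (znorm d z ^ (d + 2))⁻¹) (hφ : ∀ z, |φ z| ≤ A * znorm d z) :
    Summable fun z => ‖truncationError p φ N z‖ :=
  summable_of_sum_le (fun _ => norm_nonneg _) (sum_norm_truncationError_le hA hC hN hp hφ)

lemma norm_tsum_truncationError_le (hA : 0 ≤ A) (hC : 0 ≤ C) (hN : 0 < N)
    (hp : ∀ z ≠ 0, |p z| ≤ C * (znorm d z ^ (d + 2))⁻¹) (hφ : ∀ z, |φ z| ≤ A * znorm d z) :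
    ‖∑' z, truncationError p φ N z‖ ≤
      C * (4 * A ^ 3 * Real.exp A + 8 * A) * (2 * d * 3 ^ (d - 1)) * (N ^ 2)⁻¹ :=
  (norm_tsum_le_tsum_norm (summable_norm_truncationError hA hC hN hp hφ)).trans
    (Real.tsum_le_of_sum_le (fun _ => norm_nonneg _) (sum_norm_truncationError_le hA hC hN hp hφ))

lemma tsum_mul_compensatedExp_eq (hA : 0 ≤ A) (hC : 0 ≤ C) (hN : 0 < N)
    (hp : ∀ z ≠ 0, |p z| ≤ C * (znorm d z ^ (d + 2))⁻¹) (hφ : ∀ z, |φ z| ≤ A * znorm d z) :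
    ∑' z, p z * compensatedExp (φ z / N) =
      ∑' z, truncationError p φ N z - ((truncatedSecondMoment p φ φ N / (2 * N ^ 2) : ℝ) : ℂ) := by
  have hterm (z : Fin d → ℤ) : p z * compensatedExp (φ z / N) = truncationError p φ N z -
      (((if z ≠ 0 ∧ znorm d z ≤ N then φ z * φ z * p z else 0) / (2 * N ^ 2) : ℝ) : ℂ) := by
    rcases eq_or_ne z 0 with rfl | hz
    · have hφ_zero : φ 0 = 0 := by simpa [znorm] using hφ 0
      simp [truncationError, hφ_zero]
    · simp only [truncationError, ne_eq, hz, not_false_eq_true, true_and]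
      split_ifs <;> push_cast <;> ring
  simp_rw [hterm]
  rw [(summable_norm_truncationError hA hC hN hp hφ).of_norm.tsum_sub
    (Complex.hasSum_ofReal.mpr ((summable_ite_znorm_le _ _).div_const _).hasSum).summable,
    ← Complex.ofReal_tsum, tsum_div_const, truncatedSecondMoment]

end TruncatedExpansion

section Limit

variable {d : ℕ} {p φ : (Fin d → ℤ) → ℝ} {A : ℝ} {κ : Type*} {l : Filter κ} {R : κ → ℝ}

lemma exists_forall_abs_le_of_isBigO_cofinite
    (hp : p =O[cofinite] fun z => znorm d z ^ (-((d : ℝ) + 2))) :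
    ∃ C > 0, ∀ z ≠ 0, |p z| ≤ C * (znorm d z ^ (d + 2))⁻¹ := by
  obtain ⟨C, hC, hbound⟩ := bound_of_isBigO_cofinite hp
  refine ⟨C, hC, fun z hz => ?_⟩
  have hr := znorm_pos hz
  have hpow : znorm d z ^ (-((d : ℝ) + 2)) = (znorm d z ^ (d + 2))⁻¹ := by
    rw [Real.rpow_neg hr.le]
    exact_mod_cast rfl
  have h := hbound (Real.rpow_pos_of_pos hr _).ne'
  rwa [hpow, Real.norm_of_nonneg (by positivity : 0 ≤ (znorm d z ^ (d + 2))⁻¹)] at h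

lemma tendsto_sq_div_log_mul_tsum_truncationError
    (hp : p =O[cofinite] fun z => znorm d z ^ (-((d : ℝ) + 2))) (hA : 0 ≤ A)
    (hφ : ∀ z, |φ z| ≤ A * znorm d z) (hR : Tendsto R l atTop) :
    Tendsto (fun k => ((R k ^ 2 / Real.log (R k) : ℝ) : ℂ) * ∑' z, truncationError p φ (R k) z)
      l (𝓝 0) := by
  obtain ⟨C, hC, hpC⟩ := exists_forall_abs_le_of_isBigO_cofinite hp
  set K := C * (4 * A ^ 3 * Real.exp A + 8 * A) * (2 * d * 3 ^ (d - 1))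
  have hlog : Tendsto (fun k => K * (Real.log (R k))⁻¹) l (𝓝 0) := by
    simpa using (Real.tendsto_log_atTop.comp hR).inv_tendsto_atTop.const_mul K
  refine squeeze_zero_norm' ?_ hlog
  filter_upwards [hR.eventually_gt_atTop 1] with k hk
  have hRk : 0 < R k := zero_lt_one.trans hk
  have hlog_pos : 0 < Real.log (R k) := Real.log_pos hk
  calc _ ≤ R k ^ 2 / Real.log (R k) * (K * (R k ^ 2)⁻¹) := by
        rw [norm_mul, Complex.norm_real, Real.norm_of_nonneg (by positivity)]
        gcongr
        exact norm_tsum_truncationError_le hA hC.le hRk hpC hφ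
    _ = K * (Real.log (R k))⁻¹ := by field_simp

lemma tendsto_sq_div_log_mul_tsum_compensatedExp
    (hp : p =O[cofinite] fun z => znorm d z ^ (-((d : ℝ) + 2))) (hA : 0 ≤ A)
    (hφ : ∀ z, |φ z| ≤ A * znorm d z) (hR : Tendsto R l atTop) {σ : ℝ}
    (hσ : Tendsto (fun k => (Real.log (R k))⁻¹ * truncatedSecondMoment p φ φ (R k)) l (𝓝 σ)) :
    Tendsto (fun k => ((R k ^ 2 / Real.log (R k) : ℝ) : ℂ) *
      ∑' z, p z * compensatedExp (φ z / R k)) l (𝓝 ((-(σ / 2) : ℝ) : ℂ)) := by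
  obtain ⟨C, hC, hpC⟩ := exists_forall_abs_le_of_isBigO_cofinite hp
  have hlim := (tendsto_sq_div_log_mul_tsum_truncationError hp hA hφ hR).add
    ((Complex.continuous_ofReal.tendsto _).comp (hσ.div_const 2).neg)
  rw [zero_add] at hlim
  refine hlim.congr' ?_
  filter_upwards [hR.eventually_gt_atTop 0] with k hk
  rw [tsum_mul_compensatedExp_eq hA hC.le hk hpC hφ, mul_sub, sub_eq_add_neg, Function.comp_apply,
    ← Complex.ofReal_mul, ← Complex.ofReal_neg]
  congr 3
  field_simp

lemma tendsto_inv_log_mul_truncatedSecondMoment_sum_mul {ι : Type*} [Fintype ι]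
    {φ : ι → (Fin d → ℤ) → ℝ} {D : ι → ι → ℝ}
    (hD : ∀ i j, Tendsto
      (fun k => (Real.log (R k))⁻¹ * truncatedSecondMoment p (φ i) (φ j) (R k)) l (𝓝 (D i j)))
    (b : ι → ℝ) :
    Tendsto (fun k => (Real.log (R k))⁻¹ * truncatedSecondMoment p
      (fun z => ∑ i, φ i z * b i) (fun z => ∑ i, φ i z * b i) (R k)) l
      (𝓝 (∑ i, ∑ j, D i j * b i * b j)) := by
  simp_rw [truncatedSecondMoment_sum_mul, mul_sum, ← mul_assoc]
  exact tendsto_finsetSum _ fun i _ => tendsto_finsetSum _ fun j _ =>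
    ((hD i j).mul_const _).mul_const _

end Limit

lemma pker_isBigO_cofinite (d : ℕ) [NeZero d] (α : ℝ) :
    pker d α =O[cofinite] fun z => znorm d z ^ (-((d : ℝ) + α)) := by
  refine IsBigO.of_bound 2 (Eventually.of_forall fun z => ?_)
  have hweight : |(if 0 < z 0 then (2 : ℝ) else 0) + (if z 0 = 0 then 1 else 0)| ≤ 2 := by
    split_ifs <;> first | omega | norm_num
  rcases eq_or_ne z 0 with rfl | hz
  · simp [pker]
  · rw [pker, if_neg hz, norm_mul, mul_comm]
    exact mul_le_mul_of_nonneg_right hweight (norm_nonneg _)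

theorem statement8_general {d : ℕ} {p : (Fin d → ℤ) → ℝ}
    (hp : p =O[cofinite] fun z => znorm d z ^ (-((d : ℝ) + 2))) (D : Fin d → Fin d → ℝ)
    (hD : ∀ i j : Fin d, Tendsto (fun N : ℕ => (Real.log N)⁻¹ * ∑' z : Fin d → ℤ,
      (if z ≠ 0 ∧ znorm d z ≤ (N : ℝ) then (z i : ℝ) * (z j : ℝ) * p z else 0))
      atTop (𝓝 (D i j)))
    (a : Fin d → ℝ) (β : ℝ) :
    Tendsto (fun N : ℕ => (((N : ℝ) ^ 2 / Real.log N : ℝ) : ℂ) *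
        ∑' z : Fin d → ℤ, (p z : ℂ) *
          (Complex.exp (Complex.I * (β : ℂ) * ((∑ i, (z i : ℝ) * a i : ℝ) : ℂ) / (N : ℂ)) - 1
            - Complex.I * (β : ℂ) * ((∑ i, (z i : ℝ) * a i : ℝ) : ℂ) / (N : ℂ)))
      atTop (𝓝 ((-(β ^ 2 / 2) * ∑ i, ∑ j, D i j * a i * a j : ℝ) : ℂ)) := by
  have hmoment := tendsto_inv_log_mul_truncatedSecondMoment_sum_mul
    (φ := fun i z => (z i : ℝ)) hD fun i => β * a i
  have hlim := tendsto_sq_div_log_mul_tsum_compensatedExp hp (Real.sqrt_nonneg _)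
    (fun z => abs_sum_mul_le_znorm z fun i => β * a i) tendsto_natCast_atTop_atTop hmoment
  have hphase (z : Fin d → ℤ) : ∑ i, (z i : ℝ) * (β * a i) = β * ∑ i, (z i : ℝ) * a i := by
    simp only [mul_sum, mul_left_comm]
  have hquad : -((∑ i, ∑ j, D i j * (β * a i) * (β * a j)) / 2) =
      -(β ^ 2 / 2) * ∑ i, ∑ j, D i j * a i * a j := by
    simp only [sum_div, mul_sum, ← sum_neg_distrib]
    exact sum_congr rfl fun i _ => sum_congr rfl fun j _ => by ring
  have hexp (N : ℕ) (x : ℝ) : compensatedExp (β * x / N) =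
      Complex.exp (Complex.I * β * x / N) - 1 - Complex.I * β * x / N := by
    simp only [compensatedExp, Complex.ofReal_div, Complex.ofReal_mul, Complex.ofReal_natCast,
      mul_assoc, mul_div_assoc]
  simpa only [hphase, hexp, hquad] using hlim

/-- for `α = 2`, with `D_{i,j} = lim_{N→∞} (1/log N) Σ_{0<‖z‖≤N} z_i z_j p(z)`
(assumed to exist), one has
`lim_{N→∞} (N²/log N) Σ_{z≠0} p(z)(e^{iβ(z·a)/N} − 1 − iβ(z·a)/N)
  = −(β²/2) Σ_{i,j} D_{i,j} a_i a_j`. -/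
theorem statement8 (d : ℕ) [NeZero d] (hd : 1 ≤ d) (D : Fin d → Fin d → ℝ)
    (hD : ∀ i j : Fin d,
      Filter.Tendsto
        (fun N : ℕ => (Real.log N)⁻¹ *
          ∑' z : Fin d → ℤ,
            (if z ≠ 0 ∧ znorm d z ≤ (N : ℝ) then (z i : ℝ) * (z j : ℝ) * pker d 2 z else 0))
        Filter.atTop (nhds (D i j)))
    (a : Fin d → ℝ) (β : ℝ) :
    Filter.Tendsto
      (fun N : ℕ => (((N : ℝ) ^ 2 / Real.log N : ℝ) : ℂ) *
        ∑' z : Fin d → ℤ, (pker d 2 z : ℂ) *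
          (Complex.exp (Complex.I * (β : ℂ) * ((∑ i, (z i : ℝ) * a i : ℝ) : ℂ) / (N : ℂ)) - 1
            - Complex.I * (β : ℂ) * ((∑ i, (z i : ℝ) * a i : ℝ) : ℂ) / (N : ℂ)))
      Filter.atTop
      (nhds ((-(β ^ 2 / 2) * ∑ i, ∑ j, D i j * a i * a j : ℝ) : ℂ)) := by
  exact statement8_general (pker_isBigO_cofinite d 2) D hD a β
end
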